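/- arXiv:2512.15320 — 5 statements merged into one kernel-verified Lean document; each statement's English description precedes it below -/
import Mathlib

section
/- Let f, g : (0,∞) → [0,∞) be nonincreasing functions such that ∫₀ᵗ f(x) dx ≥ ∫₀ᵗ g(x) dx for every t > 0 and ∫₀^∞ f(x) dx = ∫₀^∞ g(x) dx < ∞. Then for every p ≥ 1 one has ∫₀^∞ f(x)^p dx ≥ ∫₀^∞ g(x)^p dx. -/
open MeasureTheory Set

/-!
By the layer-cake formula a nonincreasing weight is a superposition of indicators of initial
segments, so domination of the partial integrals of `G` by those of `F` passes to every
nonincreasing weight. The weight `G ^ (p - 1)` and Hölder's inequality give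
`∫ G ^ p ≤ ∫ F * G ^ (p - 1) ≤ (∫ F ^ p) ^ (1 / p) * (∫ G ^ p) ^ (1 / q)`, and the last factor can
be cancelled as soon as `∫ G ^ p` is finite. Lowering `G` only weakens the hypothesis, so on a
finite measure space finiteness is obtained by capping `G`.
-/

open scoped ENNReal

section LowerSets

variable {α : Type*} [LinearOrder α] [TopologicalSpace α] [ClosedIciTopology α]
  [SecondCountableTopology α]

lemma exists_countable_biUnion_Iic_eq_of_isLowerSet {S : Set α} (hS : IsLowerSet S) :
    ∃ T : Set α, T.Countable ∧ ⋃ x ∈ T, Iic x = S := by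
  by_cases hmax : ∃ m, IsGreatest S m
  · obtain ⟨m, hmS, hm⟩ := hmax
    have hIic : Iic m = S := Subset.antisymm (hS.Iic_subset hmS) hm
    exact ⟨{m}, countable_singleton m, by rw [biUnion_singleton, hIic]⟩
  · have hlt : ∀ x ∈ S, ∃ y ∈ S, x < y := by
      simpa [IsGreatest, upperBounds] using hmax
    obtain ⟨T, hTS, hT, hcover⟩ := TopologicalSpace.isOpen_biUnion_countable S Iio
      fun x _ => isOpen_Iio
    refine ⟨T, hT, Subset.antisymm (iUnion₂_subset fun x hx => hS.Iic_subset (hTS hx)) ?_⟩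
    calc S ⊆ ⋃ x ∈ S, Iio x := fun x hx => by simpa using hlt x hx
      _ = ⋃ x ∈ T, Iio x := hcover.symm
      _ ⊆ ⋃ x ∈ T, Iic x := iUnion₂_mono fun x _ => Iio_subset_Iic_self

variable [MeasurableSpace α] {μ ν : Measure α}

lemma measure_le_of_isLowerSet (h : ∀ t, ν (Iic t) ≤ μ (Iic t)) {S : Set α}
    (hS : IsLowerSet S) : ν S ≤ μ S := by
  obtain ⟨T, hT, rfl⟩ := exists_countable_biUnion_Iic_eq_of_isLowerSet hS
  have hdir : DirectedOn (Function.onFun (· ⊆ ·) Iic) T :=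
    fun x hx y hy => ⟨max x y, max_rec' (· ∈ T) hx hy,
      Iic_subset_Iic.2 (le_max_left x y), Iic_subset_Iic.2 (le_max_right x y)⟩
  rw [measure_biUnion_eq_iSup hT hdir, measure_biUnion_eq_iSup hT hdir]
  exact iSup₂_mono fun t _ => h t

end LowerSets

lemma lintegral_eq_iSup_lintegral_min_natCast {α : Type*} [MeasurableSpace α] {μ : Measure α}
    {w : α → ℝ≥0∞} (hw : Measurable w) :
    ∫⁻ x, w x ∂μ = ⨆ n : ℕ, ∫⁻ x, min (w x) n ∂μ := by
  rw [← lintegral_iSup (fun n => hw.min measurable_const)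
    fun m n hmn x => min_le_min_left _ (Nat.cast_le.2 hmn)]
  refine lintegral_congr fun x => ?_
  rw [← inf_iSup_eq, ENNReal.iSup_natCast, inf_top_eq]

lemma lintegral_rpow_le_of_le_lintegral_mul_rpow {α : Type*} [MeasurableSpace α] {μ : Measure α}
    {F G : α → ℝ≥0∞} (hF : AEMeasurable F μ) (hG : AEMeasurable G μ) {p : ℝ} (hp : 1 ≤ p)
    (hfin : ∫⁻ x, G x ^ p ∂μ ≠ ⊤)
    (h : ∫⁻ x, G x ^ p ∂μ ≤ ∫⁻ x, F x * G x ^ (p - 1) ∂μ) :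
    ∫⁻ x, G x ^ p ∂μ ≤ ∫⁻ x, F x ^ p ∂μ := by
  rcases hp.eq_or_lt with rfl | hp1
  · simpa using h
  set q := p.conjExponent
  have hpq : p.HolderConjugate q := .conjExponent hp1
  set I := ∫⁻ x, G x ^ p ∂μ
  set J := ∫⁻ x, F x ^ p ∂μ
  have holder : I ≤ J ^ (1 / p) * I ^ (1 / q) :=
    h.trans (ENNReal.lintegral_mul_rpow_le_lintegral_rpow_mul_lintegral_rpow hpq hF hG)
  rcases eq_or_ne I 0 with hI | hI
  · simp [hI]
  have hsplit : I ^ (1 / p) * I ^ (1 / q) = I := by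
    rw [← ENNReal.rpow_add _ _ hI hfin, one_div, one_div, hpq.inv_add_inv_eq_one,
      ENNReal.rpow_one]
  have hroot : I ^ (1 / p) ≤ J ^ (1 / p) := by
    refine (ENNReal.mul_le_mul_iff_left ?_ ?_).1 (hsplit.trans_le holder)
    · exact (ENNReal.rpow_pos (pos_iff_ne_zero.2 hI) hfin).ne'
    · exact ENNReal.rpow_ne_top_of_nonneg hpq.symm.one_div_nonneg hfin
  exact (ENNReal.rpow_le_rpow_iff hpq.one_div_pos).1 hroot

section Antitone

variable {α : Type*} [LinearOrder α] [TopologicalSpace α] [OrderClosedTopology α]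
  [SecondCountableTopology α] [MeasurableSpace α] [BorelSpace α] {μ ν : Measure α}

lemma lintegral_le_of_antitone_of_measure_Iic_le (h : ∀ t, ν (Iic t) ≤ μ (Iic t))
    {w : α → ℝ≥0∞} (hw : Antitone w) : ∫⁻ x, w x ∂ν ≤ ∫⁻ x, w x ∂μ := by
  simp only [lintegral_eq_iSup_lintegral_min_natCast hw.measurable]
  refine iSup_mono fun n => ?_
  have hne_top : ∀ x, min (w x) n ≠ ⊤ := fun x => by simp
  set v : α → ℝ := fun x => (min (w x) n).toReal
  have hv : Antitone v := fun x y hxy =>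
    ENNReal.toReal_mono (hne_top x) (min_le_min_right _ (hw hxy))
  have layercake (ρ : Measure α) :
      ∫⁻ x, min (w x) n ∂ρ = ∫⁻ s in Ioi (0 : ℝ), ρ {x | s < v x} := by
    rw [← lintegral_eq_lintegral_meas_lt ρ (.of_forall fun x => ENNReal.toReal_nonneg)
      hv.measurable.aemeasurable]
    exact lintegral_congr fun x => (ENNReal.ofReal_toReal (hne_top x)).symm
  rw [layercake, layercake]
  exact lintegral_mono fun s =>
    measure_le_of_isLowerSet h fun x y hyx (hx : s < v x) => hx.trans_le (hv hyx)

variable {F G : α → ℝ≥0∞}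

lemma lintegral_mul_le_of_antitone (hF : AEMeasurable F μ) (hG : AEMeasurable G μ)
    (hle : ∀ t, ∫⁻ x in Iic t, G x ∂μ ≤ ∫⁻ x in Iic t, F x ∂μ)
    {w : α → ℝ≥0∞} (hw : Antitone w) :
    ∫⁻ x, G x * w x ∂μ ≤ ∫⁻ x, F x * w x ∂μ := by
  have hdensity : ∀ t, μ.withDensity G (Iic t) ≤ μ.withDensity F (Iic t) := by
    simpa only [withDensity_apply _ measurableSet_Iic] using hle
  simpa only [lintegral_withDensity_eq_lintegral_mul₀, hF, hG, hw.measurable.aemeasurable,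
    Pi.mul_apply] using lintegral_le_of_antitone_of_measure_Iic_le hdensity hw

lemma lintegral_rpow_le_of_antitone_of_ne_top (hF : AEMeasurable F μ) (hG : Antitone G)
    (hle : ∀ t, ∫⁻ x in Iic t, G x ∂μ ≤ ∫⁻ x in Iic t, F x ∂μ) {p : ℝ} (hp : 1 ≤ p)
    (hfin : ∫⁻ x, G x ^ p ∂μ ≠ ⊤) :
    ∫⁻ x, G x ^ p ∂μ ≤ ∫⁻ x, F x ^ p ∂μ := by
  have hp1 : 0 ≤ p - 1 := sub_nonneg.2 hp
  have hGm : AEMeasurable G μ := hG.measurable.aemeasurable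
  refine lintegral_rpow_le_of_le_lintegral_mul_rpow hF hGm hp hfin ?_
  calc ∫⁻ x, G x ^ p ∂μ = ∫⁻ x, G x * G x ^ (p - 1) ∂μ := lintegral_congr fun x => by
        simpa using ENNReal.rpow_add_of_nonneg (x := G x) 1 (p - 1) zero_le_one hp1
    _ ≤ ∫⁻ x, F x * G x ^ (p - 1) ∂μ := lintegral_mul_le_of_antitone hF hGm hle
        fun x y hxy => ENNReal.rpow_le_rpow (hG hxy) hp1

lemma lintegral_rpow_le_of_antitone_of_isFiniteMeasure [IsFiniteMeasure μ]
    (hF : AEMeasurable F μ) (hG : Antitone G)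
    (hle : ∀ t, ∫⁻ x in Iic t, G x ∂μ ≤ ∫⁻ x in Iic t, F x ∂μ) {p : ℝ} (hp : 1 ≤ p) :
    ∫⁻ x, G x ^ p ∂μ ≤ ∫⁻ x, F x ^ p ∂μ := by
  have hp0 : 0 < p := zero_lt_one.trans_le hp
  rw [lintegral_eq_iSup_lintegral_min_natCast (hG.measurable.pow_const p)]
  refine iSup_le fun n => ?_
  -- Capping `G ^ p` rather than `G` makes the `p`-th power of the capped function `min (G ^ p) n`.
  set H : α → ℝ≥0∞ := fun x => min (G x ^ p) n ^ p⁻¹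
  have hH_rpow : ∀ x, H x ^ p = min (G x ^ p) n := fun x => ENNReal.rpow_inv_rpow hp0.ne' _
  have hH : Antitone H := fun x y hxy => by
    dsimp only [H]
    gcongr
    exact hG hxy
  have hHG : ∀ x, H x ≤ G x := fun x =>
    (ENNReal.rpow_inv_le_iff hp0).2 (min_le_left _ _)
  have hfin : ∫⁻ x, H x ^ p ∂μ ≠ ⊤ := by
    refine ((lintegral_mono fun x => (hH_rpow x).trans_le (min_le_right _ _)).trans_lt ?_).ne
    rw [lintegral_const]
    exact ENNReal.mul_lt_top (ENNReal.natCast_lt_top n) (measure_lt_top μ univ)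
  simpa only [hH_rpow] using lintegral_rpow_le_of_antitone_of_ne_top hF hH
    (fun t => (lintegral_mono hHG).trans (hle t)) hp hfin

theorem lintegral_rpow_le_of_antitone (hμ : ∀ t, μ (Iic t) < ⊤) (hF : AEMeasurable F μ)
    (hG : Antitone G) (hle : ∀ t, ∫⁻ x in Iic t, G x ∂μ ≤ ∫⁻ x in Iic t, F x ∂μ)
    {p : ℝ} (hp : 1 ≤ p) :
    ∫⁻ x, G x ^ p ∂μ ≤ ∫⁻ x, F x ^ p ∂μ := by
  have hpow : ∀ t, ∫⁻ x in Iic t, G x ^ p ∂μ ≤ ∫⁻ x in Iic t, F x ^ p ∂μ := fun t => by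
    have : IsFiniteMeasure (μ.restrict (Iic t)) := ⟨by simpa using hμ t⟩
    refine lintegral_rpow_le_of_antitone_of_isFiniteMeasure hF.restrict hG (fun s => ?_) hp
    simpa only [Measure.restrict_restrict measurableSet_Iic, Iic_inter_Iic] using hle (s ⊓ t)
  -- Testing against the constant weight `1` exhausts the space by initial segments.
  simpa using lintegral_mul_le_of_antitone (hF.pow_const p)
    (hG.measurable.pow_const p).aemeasurable hpow (antitone_const (c := 1))

end Antitone

theorem stmt_0_general {f g : ℝ → ℝ≥0∞} (hf : AEMeasurable f (volume.restrict (Ioi 0)))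
    (hg : AntitoneOn g (Ioi 0))
    (hle : ∀ t : ℝ, 0 < t → ∫⁻ x in Ioc 0 t, g x ≤ ∫⁻ x in Ioc 0 t, f x)
    {p : ℝ} (hp : 1 ≤ p) :
    ∫⁻ x in Ioi 0, g x ^ p ≤ ∫⁻ x in Ioi 0, f x ^ p := by
  obtain ⟨G, hG, hgG⟩ := hg.exists_antitone_extension (OrderBot.bddBelow _) (OrderTop.bddAbove _)
  have hrestrict (t : ℝ) : (volume.restrict (Ioi 0)).restrict (Iic t) =
      volume.restrict (Ioc 0 t) := by
    rw [Measure.restrict_restrict measurableSet_Iic, inter_comm, Ioi_inter_Iic]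
  have hμ (t : ℝ) : volume.restrict (Ioi 0) (Iic t) < ⊤ := by
    rw [← Measure.restrict_apply_univ, hrestrict]
    simp
  rw [setLIntegral_congr_fun measurableSet_Ioi fun x hx => congrArg (· ^ p) (hgG hx)]
  refine lintegral_rpow_le_of_antitone hμ hf hG (fun t => ?_) hp
  rw [hrestrict]
  rcases le_or_gt t 0 with ht | ht
  · simp [ht]
  · rw [← setLIntegral_congr_fun measurableSet_Ioc fun x hx => hgG hx.1]
    exact hle t ht

/-- Karamata-type inequality, case `p ≥ 1`: if `f, g : (0,∞) → [0,∞)` are nonincreasing,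
`∫₀ᵗ f ≥ ∫₀ᵗ g` for all `t > 0`, and `∫₀^∞ f = ∫₀^∞ g < ∞`, then
`∫₀^∞ f^p ≥ ∫₀^∞ g^p` for every `p ≥ 1`. -/
theorem stmt_0 (f g : ℝ → ℝ)
    (hfm : Measurable f) (hgm : Measurable g)
    (hfpos : ∀ x ∈ Ioi (0:ℝ), 0 ≤ f x) (hgpos : ∀ x ∈ Ioi (0:ℝ), 0 ≤ g x)
    (hfanti : AntitoneOn f (Ioi 0)) (hganti : AntitoneOn g (Ioi 0))
    (hle : ∀ t : ℝ, 0 < t →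
      ∫⁻ x in Ioc (0:ℝ) t, ENNReal.ofReal (g x) ≤
        ∫⁻ x in Ioc (0:ℝ) t, ENNReal.ofReal (f x))
    (heq : ∫⁻ x in Ioi (0:ℝ), ENNReal.ofReal (f x) =
        ∫⁻ x in Ioi (0:ℝ), ENNReal.ofReal (g x))
    (hfin : ∫⁻ x in Ioi (0:ℝ), ENNReal.ofReal (f x) < ⊤)
    (p : ℝ) (hp : 1 ≤ p) :
    ∫⁻ x in Ioi (0:ℝ), ENNReal.ofReal (g x) ^ p ≤
      ∫⁻ x in Ioi (0:ℝ), ENNReal.ofReal (f x) ^ p :=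
  stmt_0_general hfm.ennreal_ofReal.aemeasurable
    (ENNReal.ofReal_mono.comp_antitoneOn hganti) hle hp
end

section
/- Let f, g : (0,∞) → [0,∞) be nonincreasing functions such that ∫₀ᵗ f(x) dx ≥ ∫₀ᵗ g(x) dx for every t > 0 and ∫₀^∞ f(x) dx = ∫₀^∞ g(x) dx < ∞. Then for every p with 0 < p ≤ 1 one has ∫₀^∞ f(x)^p dx ≤ ∫₀^∞ g(x)^p dx. -/
open MeasureTheory Set

open scoped ENNReal

/-!
For `0 < p < 1`, the function `y ↦ y ^ p` is a positive superposition of the truncations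
`y ↦ min y k`:
`∫₀^∞ k ^ (p - 2) * min y k dk = (p * (1 - p))⁻¹ * y ^ p`.
By Tonelli it therefore suffices to compare `∫ min f k` with `∫ min g k` for each `k`. As `g` is
nonincreasing, there is a cut point `c` with `g ≥ k` before `c` and `g ≤ k` after it. Before `c` the
truncation of `g` is the constant `k`, hence at least that of `f`; after `c` the truncation does
nothing to `g`, and the tail of `f` is at most that of `g`, because `f` has the larger integral up
to `c` and no larger integral in total.
-/

section Truncation

variable {α : Type*} [MeasurableSpace α] {μ : Measure α} {f g : α → ℝ≥0∞} {s : Set α} {k : ℝ≥0∞}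

lemma setLIntegral_compl_le_of_setLIntegral_le (hs : MeasurableSet s)
    (hle : ∫⁻ x in s, g x ∂μ ≤ ∫⁻ x in s, f x ∂μ) (htotal : ∫⁻ x, f x ∂μ ≤ ∫⁻ x, g x ∂μ)
    (hfin : ∫⁻ x in s, f x ∂μ ≠ ∞) :
    ∫⁻ x in sᶜ, f x ∂μ ≤ ∫⁻ x in sᶜ, g x ∂μ := by
  refine (ENNReal.add_le_add_iff_left hfin).1 ?_
  calc ∫⁻ x in s, f x ∂μ + ∫⁻ x in sᶜ, f x ∂μ
      = ∫⁻ x, f x ∂μ := lintegral_add_compl f hs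
    _ ≤ ∫⁻ x, g x ∂μ := htotal
    _ = ∫⁻ x in s, g x ∂μ + ∫⁻ x in sᶜ, g x ∂μ := (lintegral_add_compl g hs).symm
    _ ≤ ∫⁻ x in s, f x ∂μ + ∫⁻ x in sᶜ, g x ∂μ := by gcongr

lemma lintegral_min_const_le_of_setLIntegral_le (hs : MeasurableSet s)
    (hgs : ∀ᵐ x ∂μ.restrict s, k ≤ g x) (hgsc : ∀ᵐ x ∂μ.restrict sᶜ, g x ≤ k)
    (hle : ∫⁻ x in s, g x ∂μ ≤ ∫⁻ x in s, f x ∂μ) (htotal : ∫⁻ x, f x ∂μ ≤ ∫⁻ x, g x ∂μ)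
    (hfin : ∫⁻ x in s, f x ∂μ ≠ ∞) :
    ∫⁻ x, min (f x) k ∂μ ≤ ∫⁻ x, min (g x) k ∂μ := by
  have h_on : ∫⁻ x in s, min (f x) k ∂μ ≤ ∫⁻ x in s, min (g x) k ∂μ :=
    lintegral_mono_ae <| hgs.mono fun x hx ↦ (min_le_right _ _).trans (le_min hx le_rfl)
  have h_off : ∫⁻ x in sᶜ, min (f x) k ∂μ ≤ ∫⁻ x in sᶜ, min (g x) k ∂μ :=
    calc ∫⁻ x in sᶜ, min (f x) k ∂μ
        ≤ ∫⁻ x in sᶜ, f x ∂μ := lintegral_mono fun x ↦ min_le_left _ _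
      _ ≤ ∫⁻ x in sᶜ, g x ∂μ := setLIntegral_compl_le_of_setLIntegral_le hs hle htotal hfin
      _ ≤ ∫⁻ x in sᶜ, min (g x) k ∂μ :=
        lintegral_mono_ae <| hgsc.mono fun x hx ↦ le_min le_rfl hx
  rw [← lintegral_add_compl _ hs, ← lintegral_add_compl (fun x ↦ min (g x) k) hs]
  exact add_le_add h_on h_off

end Truncation

lemma forall_lt_or_exists_cut_of_antitoneOn {α β : Type*} [ConditionallyCompleteLinearOrder α]
    [LinearOrder β] {g : α → β} {a : α} (hg : AntitoneOn g (Ioi a)) (k : β) :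
    (∀ x ∈ Ioi a, k < g x) ∨
      ∃ c, a ≤ c ∧ (∀ x ∈ Ioo a c, k < g x) ∧ ∀ x ∈ Ioi c, g x ≤ k := by
  refine or_iff_not_imp_left.2 fun h ↦ ?_
  push Not at h
  let S : Set α := {x ∈ Ioi a | g x ≤ k}
  have hS : S.Nonempty := h
  have haS : a ∈ lowerBounds S := fun x hx ↦ (mem_Ioi.1 hx.1).le
  refine ⟨sInf S, le_csInf hS haS, fun x hx ↦ ?_, fun x hx ↦ ?_⟩
  · exact not_le.1 fun hxk ↦ notMem_of_lt_csInf hx.2 ⟨a, haS⟩ ⟨hx.1, hxk⟩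
  · obtain ⟨y, hyS, hyx⟩ := exists_lt_of_csInf_lt hS hx
    exact (hg hyS.1 (mem_Ioi.2 (lt_trans hyS.1 hyx)) hyx.le).trans hyS.2

lemma setLIntegral_min_const_le_of_antitoneOn {μ : Measure ℝ} [NullSingletonClass μ]
    {f g : ℝ → ℝ≥0∞} {a : ℝ}
    (hg : AntitoneOn g (Ioi a))
    (hle : ∀ t, a < t → ∫⁻ x in Ioc a t, g x ∂μ ≤ ∫⁻ x in Ioc a t, f x ∂μ)
    (htotal : ∫⁻ x in Ioi a, f x ∂μ ≤ ∫⁻ x in Ioi a, g x ∂μ)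
    (hfin : ∫⁻ x in Ioi a, f x ∂μ ≠ ∞) (k : ℝ≥0∞) :
    ∫⁻ x in Ioi a, min (f x) k ∂μ ≤ ∫⁻ x in Ioi a, min (g x) k ∂μ := by
  rcases forall_lt_or_exists_cut_of_antitoneOn hg k with hk | ⟨c, hac, hbefore, hafter⟩
  · exact setLIntegral_mono' measurableSet_Ioi fun x hx ↦
      (min_le_right _ _).trans (le_min (hk x hx).le le_rfl)
  have h_before : (μ.restrict (Ioi a)).restrict (Iic c) = μ.restrict (Ioc a c) := by
    rw [Measure.restrict_restrict measurableSet_Iic, inter_comm, Ioi_inter_Iic]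
  have h_after : (μ.restrict (Ioi a)).restrict (Iic c)ᶜ = μ.restrict (Ioi c) := by
    rw [Measure.restrict_restrict measurableSet_Iic.compl, compl_Iic, Ioi_inter_Ioi,
      sup_eq_left.2 hac]
  apply lintegral_min_const_le_of_setLIntegral_le measurableSet_Iic (s := Iic c) _ _ _ htotal
  · exact ((lintegral_mono' Measure.restrict_le_self le_rfl).trans_lt hfin.lt_top).ne
  · rw [h_before, ← restrict_Ioo_eq_restrict_Ioc]
    exact ae_restrict_of_forall_mem measurableSet_Ioo fun x hx ↦ (hbefore x hx).le
  · rw [h_after]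
    exact ae_restrict_of_forall_mem measurableSet_Ioi hafter
  · rw [h_before]
    rcases hac.eq_or_lt with rfl | hac
    · simp
    · exact hle c hac

section LayerCake

lemma lintegral_Ioc_zero_rpow {r b : ℝ} (hr : -1 < r) (hb : 0 ≤ b) :
    ∫⁻ x in Ioc 0 b, ENNReal.ofReal (x ^ r) = ENNReal.ofReal (b ^ (r + 1) / (r + 1)) := by
  have hint : IntegrableOn (fun x : ℝ ↦ x ^ r) (Ioc 0 b) :=
    (intervalIntegrable_iff_integrableOn_Ioc_of_le hb).1
      (intervalIntegral.intervalIntegrable_rpow' hr)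
  have hnonneg : ∀ᵐ x ∂volume.restrict (Ioc 0 b), 0 ≤ x ^ r :=
    ae_restrict_of_forall_mem measurableSet_Ioc fun x hx ↦ Real.rpow_nonneg hx.1.le r
  rw [← ofReal_integral_eq_lintegral_ofReal hint hnonneg, ← intervalIntegral.integral_of_le hb,
    integral_rpow (Or.inl hr), Real.zero_rpow (by linarith), sub_zero]

lemma lintegral_Ioi_rpow_of_lt {r b : ℝ} (hr : r < -1) (hb : 0 < b) :
    ∫⁻ x in Ioi b, ENNReal.ofReal (x ^ r) = ENNReal.ofReal (-b ^ (r + 1) / (r + 1)) := by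
  have hnonneg : ∀ᵐ x ∂volume.restrict (Ioi b), 0 ≤ x ^ r :=
    ae_restrict_of_forall_mem measurableSet_Ioi fun x hx ↦ Real.rpow_nonneg (hb.trans hx).le r
  rw [← ofReal_integral_eq_lintegral_ofReal (integrableOn_Ioi_rpow_of_lt hr hb) hnonneg,
    integral_Ioi_rpow_of_lt hr hb]

lemma lintegral_Ioi_zero_rpow (r : ℝ) : ∫⁻ x in Ioi (0 : ℝ), ENNReal.ofReal (x ^ r) = ∞ := by
  have hnonneg : ∀ᵐ x ∂volume.restrict (Ioi (0 : ℝ)), 0 ≤ x ^ r :=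
    ae_restrict_of_forall_mem measurableSet_Ioi fun x hx ↦ Real.rpow_nonneg (mem_Ioi.1 hx).le r
  by_contra hfin
  exact not_integrableOn_Ioi_rpow r <|
    (lintegral_ofReal_ne_top_iff_integrable (by fun_prop) hnonneg).1 hfin

lemma ofReal_rpow_mul_ofReal {k : ℝ} (hk : 0 < k) (r : ℝ) :
    ENNReal.ofReal (k ^ r) * ENNReal.ofReal k = ENNReal.ofReal (k ^ (r + 1)) := by
  rw [← ENNReal.ofReal_mul (by positivity), Real.rpow_add_one hk.ne']

variable {p : ℝ}

lemma lintegral_rpow_mul_min_ofReal (hp0 : 0 < p) (hp1 : p < 1) {b : ℝ} (hb : 0 < b) :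
    ∫⁻ k in Ioi (0 : ℝ), ENNReal.ofReal (k ^ (p - 2)) * min (ENNReal.ofReal b) (ENNReal.ofReal k) =
      ENNReal.ofReal (p * (1 - p))⁻¹ * ENNReal.ofReal b ^ p := by
  have hq : 0 < 1 - p := sub_pos.2 hp1
  have h_below : ∫⁻ k in Ioc 0 b,
      ENNReal.ofReal (k ^ (p - 2)) * min (ENNReal.ofReal b) (ENNReal.ofReal k) =
        ENNReal.ofReal (b ^ p / p) := by
    rw [setLIntegral_congr_fun (g := fun k ↦ ENNReal.ofReal (k ^ (p - 1))) measurableSet_Ioc,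
      lintegral_Ioc_zero_rpow (by linarith) hb.le, sub_add_cancel]
    intro k hk
    simp only [min_eq_right (ENNReal.ofReal_le_ofReal hk.2), ofReal_rpow_mul_ofReal hk.1]
    ring_nf
  have h_above : ∫⁻ k in Ioi b,
      ENNReal.ofReal (k ^ (p - 2)) * min (ENNReal.ofReal b) (ENNReal.ofReal k) =
        ENNReal.ofReal (b ^ p / (1 - p)) := by
    rw [setLIntegral_congr_fun
        (g := fun k ↦ ENNReal.ofReal (k ^ (p - 2)) * ENNReal.ofReal b) measurableSet_Ioi
        fun k hk ↦ by simp only [min_eq_left (ENNReal.ofReal_le_ofReal (mem_Ioi.1 hk).le)],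
      lintegral_mul_const _ (by fun_prop), lintegral_Ioi_rpow_of_lt (by linarith) hb,
      ← ENNReal.ofReal_mul' hb.le]
    have hbp : b ^ p = b ^ (p - 2 + 1) * b := by
      rw [← Real.rpow_add_one hb.ne']
      ring_nf
    rw [hbp, show p - 2 + 1 = -(1 - p) by ring]
    field_simp
  rw [← Ioc_union_Ioi_eq_Ioi hb.le, lintegral_union measurableSet_Ioi (Ioc_disjoint_Ioi le_rfl),
    h_below, h_above, ENNReal.ofReal_rpow_of_pos hb,
    ← ENNReal.ofReal_add (by positivity) (by positivity), ← ENNReal.ofReal_mul (by positivity)]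
  congr 1
  field_simp
  ring

lemma lintegral_rpow_mul_min (hp0 : 0 < p) (hp1 : p < 1) (y : ℝ≥0∞) :
    ∫⁻ k in Ioi (0 : ℝ), ENNReal.ofReal (k ^ (p - 2)) * min y (ENNReal.ofReal k) =
      ENNReal.ofReal (p * (1 - p))⁻¹ * y ^ p := by
  rcases y.trichotomy with rfl | rfl | hy
  · simp [hp0]
  · have hC : ENNReal.ofReal (p * (1 - p))⁻¹ ≠ 0 :=
      (ENNReal.ofReal_pos.2 (inv_pos.2 (mul_pos hp0 (sub_pos.2 hp1)))).ne'
    rw [ENNReal.top_rpow_of_pos hp0, ENNReal.mul_top hC]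
    refine (setLIntegral_congr_fun measurableSet_Ioi fun k hk ↦ ?_).trans
      (lintegral_Ioi_zero_rpow (p - 2 + 1))
    simp only [min_top_left, ofReal_rpow_mul_ofReal (mem_Ioi.1 hk)]
  · rw [← ENNReal.ofReal_toReal (ENNReal.toReal_pos_iff.1 hy).2.ne]
    exact lintegral_rpow_mul_min_ofReal hp0 hp1 hy

variable {α : Type*} [MeasurableSpace α] {μ : Measure α} [SFinite μ] {f g : α → ℝ≥0∞}

lemma lintegral_rpow_eq_lintegral_lintegral_min (hp0 : 0 < p) (hp1 : p < 1)
    (hf : AEMeasurable f μ) :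
    ENNReal.ofReal (p * (1 - p))⁻¹ * ∫⁻ x, f x ^ p ∂μ =
      ∫⁻ k in Ioi (0 : ℝ), ENNReal.ofReal (k ^ (p - 2)) *
        ∫⁻ x, min (f x) (ENNReal.ofReal k) ∂μ := by
  have hmeas : AEMeasurable
      (Function.uncurry fun x k ↦ ENNReal.ofReal (k ^ (p - 2)) * min (f x) (ENNReal.ofReal k))
      (μ.prod (volume.restrict (Ioi (0 : ℝ)))) := by
    have := hf.comp_fst (ν := volume.restrict (Ioi (0 : ℝ)))
    unfold Function.uncurry
    fun_prop
  calc ENNReal.ofReal (p * (1 - p))⁻¹ * ∫⁻ x, f x ^ p ∂μ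
      = ∫⁻ x, (∫⁻ k in Ioi (0 : ℝ),
          ENNReal.ofReal (k ^ (p - 2)) * min (f x) (ENNReal.ofReal k)) ∂μ := by
        simp_rw [lintegral_rpow_mul_min hp0 hp1]
        rw [lintegral_const_mul' _ _ ENNReal.ofReal_ne_top]
    _ = ∫⁻ k in Ioi (0 : ℝ), (∫⁻ x,
          ENNReal.ofReal (k ^ (p - 2)) * min (f x) (ENNReal.ofReal k) ∂μ) :=
        lintegral_lintegral_swap hmeas
    _ = ∫⁻ k in Ioi (0 : ℝ), ENNReal.ofReal (k ^ (p - 2)) *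
          ∫⁻ x, min (f x) (ENNReal.ofReal k) ∂μ := by
        simp_rw [lintegral_const_mul' _ _ ENNReal.ofReal_ne_top]

lemma lintegral_rpow_le_of_forall_lintegral_min_le (hp0 : 0 < p) (hp1 : p < 1)
    (hf : AEMeasurable f μ) (hg : AEMeasurable g μ)
    (hmin : ∀ k, ∫⁻ x, min (f x) k ∂μ ≤ ∫⁻ x, min (g x) k ∂μ) :
    ∫⁻ x, f x ^ p ∂μ ≤ ∫⁻ x, g x ^ p ∂μ := by
  have hC : ENNReal.ofReal (p * (1 - p))⁻¹ ≠ 0 :=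
    (ENNReal.ofReal_pos.2 (inv_pos.2 (mul_pos hp0 (sub_pos.2 hp1)))).ne'
  rw [← ENNReal.mul_le_mul_iff_right hC ENNReal.ofReal_ne_top,
    lintegral_rpow_eq_lintegral_lintegral_min hp0 hp1 hf,
    lintegral_rpow_eq_lintegral_lintegral_min hp0 hp1 hg]
  exact lintegral_mono fun k ↦ mul_le_mul_right (hmin _) _

end LayerCake

theorem stmt_1_general {μ : Measure ℝ} [SFinite μ] [NullSingletonClass μ] {f g : ℝ → ℝ≥0∞} {a p : ℝ}
    (hf : AEMeasurable f (μ.restrict (Ioi a))) (hg : AntitoneOn g (Ioi a))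
    (hle : ∀ t, a < t → ∫⁻ x in Ioc a t, g x ∂μ ≤ ∫⁻ x in Ioc a t, f x ∂μ)
    (htotal : ∫⁻ x in Ioi a, f x ∂μ ≤ ∫⁻ x in Ioi a, g x ∂μ)
    (hfin : ∫⁻ x in Ioi a, f x ∂μ ≠ ∞) (hp0 : 0 < p) (hp1 : p ≤ 1) :
    ∫⁻ x in Ioi a, f x ^ p ∂μ ≤ ∫⁻ x in Ioi a, g x ^ p ∂μ := by
  rcases hp1.eq_or_lt with rfl | hp1
  · simpa only [ENNReal.rpow_one] using htotal
  · exact lintegral_rpow_le_of_forall_lintegral_min_le hp0 hp1 hf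
      (aemeasurable_restrict_of_antitoneOn measurableSet_Ioi hg)
      (setLIntegral_min_const_le_of_antitoneOn hg hle htotal hfin)

/-- Karamata-type inequality, case `0 < p ≤ 1`: if `f, g : (0,∞) → [0,∞)` are nonincreasing,
`∫₀ᵗ f ≥ ∫₀ᵗ g` for all `t > 0`, and `∫₀^∞ f = ∫₀^∞ g < ∞`, then
`∫₀^∞ f^p ≤ ∫₀^∞ g^p` for every `0 < p ≤ 1`. -/
theorem stmt_1 (f g : ℝ → ℝ)
    (hfm : Measurable f) (hgm : Measurable g)
    (hfpos : ∀ x ∈ Ioi (0:ℝ), 0 ≤ f x) (hgpos : ∀ x ∈ Ioi (0:ℝ), 0 ≤ g x)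
    (hfanti : AntitoneOn f (Ioi 0)) (hganti : AntitoneOn g (Ioi 0))
    (hle : ∀ t : ℝ, 0 < t →
      ∫⁻ x in Ioc (0:ℝ) t, ENNReal.ofReal (g x) ≤
        ∫⁻ x in Ioc (0:ℝ) t, ENNReal.ofReal (f x))
    (heq : ∫⁻ x in Ioi (0:ℝ), ENNReal.ofReal (f x) =
        ∫⁻ x in Ioi (0:ℝ), ENNReal.ofReal (g x))
    (hfin : ∫⁻ x in Ioi (0:ℝ), ENNReal.ofReal (f x) < ⊤)
    (p : ℝ) (hp0 : 0 < p) (hp1 : p ≤ 1) :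
    ∫⁻ x in Ioi (0:ℝ), ENNReal.ofReal (f x) ^ p ≤
      ∫⁻ x in Ioi (0:ℝ), ENNReal.ofReal (g x) ^ p := by
  exact stmt_1_general hfm.ennreal_ofReal.aemeasurable
    (ENNReal.ofReal_mono.comp_antitoneOn hganti) hle heq.le hfin.ne hp0 hp1
end

section
/- Let 0 < r < ∞, 0 < q < ∞ and β = max(1/q, 1/r). There exists a constant C > 0, depending only on q and r and not on α, such that for every α > 0 and every nonincreasing function f : (0,∞) → [0,∞) one has (∫₀^∞ (t^{-α} (∫₀ᵗ f(s)^r ds)^{1/r})^q dt/t)^{1/q} ≤ C α^{-β} (∫₀^∞ (t^{1/r - α} f(t))^q dt/t)^{1/q}. -/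
open MeasureTheory Set

open scoped ENNReal

/-!
With `F = f ^ r`, `p = q / r` and `a = α * r`, the claim is the weighted Hardy inequality
`∫₀^∞ t ^ (-a p - 1) (∫₀ᵗ F) ^ p dt ≤ K ∫₀^∞ s ^ ((1 - a) p - 1) F(s) ^ p ds`.
In both ranges of `p` one first bounds `(∫₀ᵗ F) ^ p` by a power of `t` times a weighted integral of
`F ^ p` over `(0, t]`, and then exchanges the order of integration.

* For `1 ≤ p` the bound is Hölder's inequality against the weight `s ^ (a - 1)`. Tying the weight to
  `a` is what yields the sharp constant `K = a ^ (-p)`.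
* For `p ≤ 1` monotonicity gives `s ^ p F(s) ^ p ≤ J := ∫₀ᵗ u ^ (p - 1) F(u) ^ p du` for `s ≤ t`.
  Hence `F = F ^ (1 - p) F ^ p ≤ J ^ ((1 - p) / p) s ^ (p - 1) F ^ p`, which integrates to
  `(∫₀ᵗ F) ^ p ≤ J`, and `K = (a p)⁻¹`.
-/

section PowersOfReals

variable {t : ℝ}

lemma ofReal_rpow_mul_ofReal_rpow (ht : 0 < t) (x y : ℝ) :
    ENNReal.ofReal (t ^ x) * ENNReal.ofReal (t ^ y) = ENNReal.ofReal (t ^ (x + y)) := by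
  rw [← ENNReal.ofReal_mul (by positivity), Real.rpow_add ht]

lemma ofReal_rpow_rpow (ht : 0 < t) (x y : ℝ) :
    ENNReal.ofReal (t ^ x) ^ y = ENNReal.ofReal (t ^ (x * y)) := by
  rw [ENNReal.ofReal_rpow_of_pos (by positivity), Real.rpow_mul ht.le]

lemma lintegral_ofReal_rpow_mul_rpow_mul_inv {q : ℝ} (hq : 0 ≤ q) (x : ℝ) (G : ℝ → ℝ≥0∞) :
    ∫⁻ t in Ioi (0 : ℝ), (ENNReal.ofReal (t ^ x) * G t) ^ q * ENNReal.ofReal t⁻¹ =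
      ∫⁻ t in Ioi (0 : ℝ), ENNReal.ofReal (t ^ (x * q - 1)) * G t ^ q := by
  refine setLIntegral_congr_fun measurableSet_Ioi fun t ht ↦ ?_
  rw [ENNReal.mul_rpow_of_nonneg _ _ hq, ofReal_rpow_rpow ht, mul_right_comm, ← Real.rpow_neg_one,
    ofReal_rpow_mul_ofReal_rpow ht, ← sub_eq_add_neg]

lemma lintegral_Ici_ofReal_rpow {x : ℝ} (hx : x < -1) (ht : 0 < t) :
    ∫⁻ u in Ici t, ENNReal.ofReal (u ^ x) = ENNReal.ofReal (-t ^ (x + 1) / (x + 1)) := by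
  rw [← restrict_Ioi_eq_restrict_Ici, ← integral_Ioi_rpow_of_lt hx ht,
    ofReal_integral_eq_lintegral_ofReal (integrableOn_Ioi_rpow_of_lt hx ht)]
  filter_upwards [ae_restrict_mem measurableSet_Ioi] with u hu
  exact Real.rpow_nonneg (ht.trans hu).le x

lemma lintegral_Ioc_zero_ofReal_rpow {x : ℝ} (hx : -1 < x) (ht : 0 ≤ t) :
    ∫⁻ u in Ioc 0 t, ENNReal.ofReal (u ^ x) = ENNReal.ofReal (t ^ (x + 1) / (x + 1)) := by
  have integrable : IntegrableOn (fun u : ℝ ↦ u ^ x) (Ioc 0 t) :=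
    (intervalIntegrable_iff_integrableOn_Ioc_of_le ht).1
      (intervalIntegral.intervalIntegrable_rpow' hx)
  have integral : ∫ u in Ioc 0 t, u ^ x = t ^ (x + 1) / (x + 1) := by
    rw [← intervalIntegral.integral_of_le ht, integral_rpow (Or.inl hx),
      Real.zero_rpow (by linarith), sub_zero]
  rw [← integral, ofReal_integral_eq_lintegral_ofReal integrable]
  filter_upwards [ae_restrict_mem measurableSet_Ioc] with u hu
  exact Real.rpow_nonneg hu.1.le x

end PowersOfReals

section ExchangeOfIntegrals

lemma lintegral_mul_lintegral_Iic {X : Type*} [TopologicalSpace X] [LinearOrder X]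
    [OrderClosedTopology X] [SecondCountableTopology X] [MeasurableSpace X]
    [OpensMeasurableSpace X] {μ ν : Measure X} [SFinite μ] [SFinite ν] {g G : X → ℝ≥0∞}
    (hg : AEMeasurable g ν) (hG : AEMeasurable G μ) :
    ∫⁻ t, g t * ∫⁻ s in Iic t, G s ∂μ ∂ν = ∫⁻ s, (∫⁻ t in Ici s, g t ∂ν) * G s ∂μ := by
  let triangle : Set (X × X) := {z | z.2 ≤ z.1}
  have measurable_integrand : AEMeasurable
      (Function.uncurry fun t s ↦ triangle.indicator (fun z ↦ g z.1 * G z.2) (t, s))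
      (ν.prod μ) :=
    (hg.comp_fst.mul hG.comp_snd).indicator (measurableSet_le measurable_snd measurable_fst)
  calc ∫⁻ t, g t * ∫⁻ s in Iic t, G s ∂μ ∂ν
    _ = ∫⁻ t, ∫⁻ s, triangle.indicator (fun z ↦ g z.1 * G z.2) (t, s) ∂μ ∂ν := by
        refine lintegral_congr fun t ↦ ?_
        rw [← lintegral_const_mul'' _ hG.restrict, ← lintegral_indicator measurableSet_Iic]
        rfl
    _ = ∫⁻ s, ∫⁻ t, triangle.indicator (fun z ↦ g z.1 * G z.2) (t, s) ∂ν ∂μ :=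
        lintegral_lintegral_swap measurable_integrand
    _ = ∫⁻ s, (∫⁻ t in Ici s, g t ∂ν) * G s ∂μ := by
        refine lintegral_congr fun s ↦ ?_
        rw [← lintegral_mul_const'' _ hg.restrict, ← lintegral_indicator measurableSet_Ici]
        rfl

lemma lintegral_rpow_mul_lintegral_Ioc {δ : ℝ} (hδ : 0 < δ) {G : ℝ → ℝ≥0∞}
    (hG : AEMeasurable G (volume.restrict (Ioi 0))) :
    ∫⁻ t in Ioi (0 : ℝ), ENNReal.ofReal (t ^ (-δ - 1)) * ∫⁻ s in Ioc 0 t, G s =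
      ENNReal.ofReal δ⁻¹ * ∫⁻ s in Ioi (0 : ℝ), ENNReal.ofReal (s ^ (-δ)) * G s := by
  have swap := lintegral_mul_lintegral_Iic (ν := volume.restrict (Ioi (0 : ℝ)))
    (g := fun t : ℝ ↦ ENNReal.ofReal (t ^ (-δ - 1))) (by fun_prop) hG
  simp only [Measure.restrict_restrict measurableSet_Iic, Iic_inter_Ioi] at swap
  rw [swap, ← lintegral_const_mul' _ _ ENNReal.ofReal_ne_top]
  refine setLIntegral_congr_fun measurableSet_Ioi fun s hs ↦ ?_
  have hs : 0 < s := hs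
  have Ici_inter : Ici s ∩ Ioi 0 = Ici s := inter_eq_left.2 (Ici_subset_Ioi.2 hs)
  have tail : -s ^ (-δ - 1 + 1) / (-δ - 1 + 1) = δ⁻¹ * s ^ (-δ) := by
    rw [sub_add_cancel, neg_div_neg_eq, div_eq_inv_mul]
  rw [Measure.restrict_restrict measurableSet_Ici, Ici_inter,
    lintegral_Ici_ofReal_rpow (by linarith) hs, tail, ENNReal.ofReal_mul (by positivity), mul_assoc]

end ExchangeOfIntegrals

section ExponentAtLeastOne

lemma lintegral_rpow_le_lintegral_rpow_mul_lintegral {X : Type*} [MeasurableSpace X]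
    {μ : Measure X} {p : ℝ} (hp : 1 ≤ p) {F w : X → ℝ≥0∞} (hF : AEMeasurable F μ)
    (hw : AEMeasurable w μ) (w_ne_zero : ∀ᵐ x ∂μ, w x ≠ 0) (w_ne_top : ∀ᵐ x ∂μ, w x ≠ ⊤) :
    (∫⁻ x, F x ∂μ) ^ p ≤ (∫⁻ x, w x ∂μ) ^ (p - 1) * ∫⁻ x, w x ^ (1 - p) * F x ^ p ∂μ := by
  have hp0 : 0 < p := one_pos.trans_le hp
  have hp_inv : 0 ≤ 1 - p⁻¹ := sub_nonneg.2 (inv_le_one_of_one_le₀ hp)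
  have factor : ∀ᵐ x ∂μ, F x = (w x ^ (1 - p) * F x ^ p) ^ p⁻¹ * w x ^ (1 - p⁻¹) := by
    filter_upwards [w_ne_zero, w_ne_top] with x h0 h_top
    have exponents : (1 - p) * p⁻¹ + (1 - p⁻¹) = 0 := by field_simp; ring
    rw [ENNReal.mul_rpow_of_nonneg _ _ (by positivity), ENNReal.rpow_rpow_inv hp0.ne',
      mul_right_comm, ← ENNReal.rpow_mul, ← ENNReal.rpow_add _ _ h0 h_top, exponents,
      ENNReal.rpow_zero, one_mul]
  calc (∫⁻ x, F x ∂μ) ^ p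
    _ = (∫⁻ x, (w x ^ (1 - p) * F x ^ p) ^ p⁻¹ * w x ^ (1 - p⁻¹) ∂μ) ^ p := by
        rw [lintegral_congr_ae factor]
    _ ≤ ((∫⁻ x, w x ^ (1 - p) * F x ^ p ∂μ) ^ p⁻¹ * (∫⁻ x, w x ∂μ) ^ (1 - p⁻¹)) ^ p := by
        gcongr
        exact ENNReal.lintegral_mul_norm_pow_le (by fun_prop) hw (by positivity) hp_inv (by ring)
    _ = (∫⁻ x, w x ∂μ) ^ (p - 1) * ∫⁻ x, w x ^ (1 - p) * F x ^ p ∂μ := by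
        rw [ENNReal.mul_rpow_of_nonneg _ _ hp0.le, ENNReal.rpow_inv_rpow hp0.ne',
          ← ENNReal.rpow_mul, sub_mul, one_mul, inv_mul_cancel₀ hp0.ne', mul_comm]

lemma lintegral_Ioc_rpow_le_of_one_le {p a t : ℝ} (hp : 1 ≤ p) (ha : 0 < a) (ht : 0 < t)
    {F : ℝ → ℝ≥0∞} (hF : AEMeasurable F (volume.restrict (Ioc 0 t))) :
    (∫⁻ s in Ioc 0 t, F s) ^ p ≤ ENNReal.ofReal (a ^ (1 - p) * t ^ (a * (p - 1))) *
      ∫⁻ s in Ioc 0 t, ENNReal.ofReal (s ^ ((a - 1) * (1 - p))) * F s ^ p := by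
  have weight_pos : ∀ᵐ s ∂volume.restrict (Ioc 0 t), ENNReal.ofReal (s ^ (a - 1)) ≠ 0 := by
    filter_upwards [ae_restrict_mem measurableSet_Ioc] with s hs
    exact (ENNReal.ofReal_pos.2 (Real.rpow_pos_of_pos hs.1 _)).ne'
  have constant : (t ^ a / a) ^ (p - 1) = a ^ (1 - p) * t ^ (a * (p - 1)) := by
    rw [Real.div_rpow (by positivity) ha.le, ← Real.rpow_mul ht.le, div_eq_inv_mul,
      ← Real.rpow_neg ha.le, neg_sub]
  convert lintegral_rpow_le_lintegral_rpow_mul_lintegral hp hF (by fun_prop) weight_pos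
    (ae_of_all _ fun _ ↦ ENNReal.ofReal_ne_top) using 2
  · rw [lintegral_Ioc_zero_ofReal_rpow (by linarith) ht.le, sub_add_cancel,
      ENNReal.ofReal_rpow_of_pos (by positivity), constant]
  · exact setLIntegral_congr_fun measurableSet_Ioc fun s hs ↦ by rw [ofReal_rpow_rpow hs.1]

theorem lintegral_hardy_of_one_le {p a : ℝ} (hp : 1 ≤ p) (ha : 0 < a) {F : ℝ → ℝ≥0∞}
    (hF : AEMeasurable F (volume.restrict (Ioi 0))) :
    ∫⁻ t in Ioi (0 : ℝ), ENNReal.ofReal (t ^ (-(a * p) - 1)) * (∫⁻ s in Ioc 0 t, F s) ^ p ≤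
      ENNReal.ofReal (a ^ (-p)) *
        ∫⁻ s in Ioi (0 : ℝ), ENNReal.ofReal (s ^ ((1 - a) * p - 1)) * F s ^ p := by
  let G : ℝ → ℝ≥0∞ := fun s ↦ ENNReal.ofReal (s ^ ((a - 1) * (1 - p))) * F s ^ p
  calc ∫⁻ t in Ioi (0 : ℝ), ENNReal.ofReal (t ^ (-(a * p) - 1)) * (∫⁻ s in Ioc 0 t, F s) ^ p
    _ ≤ ∫⁻ t in Ioi (0 : ℝ), ENNReal.ofReal (a ^ (1 - p)) *
          (ENNReal.ofReal (t ^ (-a - 1)) * ∫⁻ s in Ioc 0 t, G s) := by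
        refine setLIntegral_mono' measurableSet_Ioi fun t (ht : 0 < t) ↦ ?_
        have exponents : -a - 1 = -(a * p) - 1 + a * (p - 1) := by ring
        grw [lintegral_Ioc_rpow_le_of_one_le hp ha ht
          (hF.mono_measure (Measure.restrict_mono Ioc_subset_Ioi_self le_rfl)), exponents,
          ← ofReal_rpow_mul_ofReal_rpow ht, ENNReal.ofReal_mul (by positivity)]
        exact le_of_eq (by ring)
    _ = ENNReal.ofReal (a ^ (1 - p)) *
          (ENNReal.ofReal a⁻¹ * ∫⁻ s in Ioi (0 : ℝ), ENNReal.ofReal (s ^ (-a)) * G s) := by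
        rw [lintegral_const_mul' _ _ ENNReal.ofReal_ne_top,
          lintegral_rpow_mul_lintegral_Ioc ha (by fun_prop)]
    _ = ENNReal.ofReal (a ^ (-p)) *
          ∫⁻ s in Ioi (0 : ℝ), ENNReal.ofReal (s ^ ((1 - a) * p - 1)) * F s ^ p := by
        rw [← mul_assoc, ← Real.rpow_neg_one a, ofReal_rpow_mul_ofReal_rpow ha]
        congr 1
        · ring_nf
        · refine setLIntegral_congr_fun measurableSet_Ioi fun s hs ↦ ?_
          rw [← mul_assoc, ofReal_rpow_mul_ofReal_rpow hs]
          ring_nf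

end ExponentAtLeastOne

section ExponentAtMostOne

variable {p t : ℝ} {F : ℝ → ℝ≥0∞}

lemma ofReal_rpow_mul_rpow_le_lintegral_Ioc_of_antitoneOn (hp0 : 0 ≤ p) (hp1 : p ≤ 1) (ht : 0 < t)
    (hF : AntitoneOn F (Ioc 0 t)) :
    ENNReal.ofReal (t ^ p) * F t ^ p ≤
      ∫⁻ s in Ioc 0 t, ENNReal.ofReal (s ^ (p - 1)) * F s ^ p := by
  calc ENNReal.ofReal (t ^ p) * F t ^ p
    _ = ∫⁻ _ in Ioc 0 t, ENNReal.ofReal (t ^ (p - 1)) * F t ^ p := by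
        rw [setLIntegral_const, Real.volume_Ioc, sub_zero, mul_right_comm,
          ← ENNReal.ofReal_mul (by positivity), ← Real.rpow_add_one ht.ne', sub_add_cancel]
    _ ≤ ∫⁻ s in Ioc 0 t, ENNReal.ofReal (s ^ (p - 1)) * F s ^ p := by
        refine setLIntegral_mono' measurableSet_Ioc fun s hs ↦ ?_
        gcongr ENNReal.ofReal ?_ * ?_ ^ p
        · exact Real.rpow_le_rpow_of_nonpos hs.1 hs.2 (by linarith)
        · exact hF hs (right_mem_Ioc.2 ht) hs.2

lemma lintegral_Ioc_rpow_le_of_antitoneOn (hp0 : 0 < p) (hp1 : p ≤ 1)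
    (hF : AntitoneOn F (Ioc 0 t)) :
    (∫⁻ s in Ioc 0 t, F s) ^ p ≤ ∫⁻ s in Ioc 0 t, ENNReal.ofReal (s ^ (p - 1)) * F s ^ p := by
  set J := ∫⁻ s in Ioc 0 t, ENNReal.ofReal (s ^ (p - 1)) * F s ^ p
  rcases eq_or_ne J ⊤ with J_top | J_ne_top
  · exact J_top ▸ le_top
  have hp : 0 ≤ p⁻¹ * (1 - p) := mul_nonneg (by positivity) (by linarith)
  have mul_le (s : ℝ) (hs : s ∈ Ioc 0 t) : ENNReal.ofReal s * F s ≤ J ^ p⁻¹ := by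
    have hF_s : AntitoneOn F (Ioc 0 s) := hF.mono (Ioc_subset_Ioc_right hs.2)
    rw [ENNReal.le_rpow_inv_iff hp0, ENNReal.mul_rpow_of_nonneg _ _ hp0.le,
      ENNReal.ofReal_rpow_of_pos hs.1]
    exact (ofReal_rpow_mul_rpow_le_lintegral_Ioc_of_antitoneOn hp0.le hp1 hs.1 hF_s).trans
      (lintegral_mono_set (Ioc_subset_Ioc_right hs.2))
  have pointwise (s : ℝ) (hs : s ∈ Ioc 0 t) :
      F s ≤ J ^ (p⁻¹ * (1 - p)) * (ENNReal.ofReal (s ^ (p - 1)) * F s ^ p) := by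
    calc F s
      _ = ENNReal.ofReal (s ^ (1 - p + (p - 1))) * F s ^ (1 - p + p) := by simp
      _ = (ENNReal.ofReal s * F s) ^ (1 - p) * (ENNReal.ofReal (s ^ (p - 1)) * F s ^ p) := by
          rw [← ofReal_rpow_mul_ofReal_rpow hs.1,
            ENNReal.rpow_add_of_nonneg _ _ (by linarith) hp0.le,
            ENNReal.mul_rpow_of_nonneg _ _ (by linarith), ENNReal.ofReal_rpow_of_pos hs.1]
          ring
      _ ≤ J ^ (p⁻¹ * (1 - p)) * (ENNReal.ofReal (s ^ (p - 1)) * F s ^ p) := by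
          rw [ENNReal.rpow_mul]
          gcongr ?_ * _
          exact ENNReal.rpow_le_rpow (mul_le s hs) (by linarith)
  have exponents : (p⁻¹ * (1 - p) + 1) * p = 1 := by field_simp; ring
  calc (∫⁻ s in Ioc 0 t, F s) ^ p
    _ ≤ (J ^ (p⁻¹ * (1 - p)) * J) ^ p := by
        gcongr
        rw [← lintegral_const_mul' _ _ (ENNReal.rpow_ne_top_of_nonneg hp J_ne_top)]
        exact setLIntegral_mono' measurableSet_Ioc pointwise
    _ = J := by
        nth_rw 2 [← ENNReal.rpow_one J]
        rw [← ENNReal.rpow_add_of_nonneg _ _ hp zero_le_one, ← ENNReal.rpow_mul, exponents,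
          ENNReal.rpow_one]

theorem lintegral_hardy_of_antitoneOn_of_le_one {a : ℝ} (hp0 : 0 < p) (hp1 : p ≤ 1) (ha : 0 < a)
    (hF : AntitoneOn F (Ioi 0)) :
    ∫⁻ t in Ioi (0 : ℝ), ENNReal.ofReal (t ^ (-(a * p) - 1)) * (∫⁻ s in Ioc 0 t, F s) ^ p ≤
      ENNReal.ofReal (a * p)⁻¹ *
        ∫⁻ s in Ioi (0 : ℝ), ENNReal.ofReal (s ^ ((1 - a) * p - 1)) * F s ^ p := by
  have measurable_F : AEMeasurable F (volume.restrict (Ioi 0)) :=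
    aemeasurable_restrict_of_antitoneOn measurableSet_Ioi hF
  calc ∫⁻ t in Ioi (0 : ℝ), ENNReal.ofReal (t ^ (-(a * p) - 1)) * (∫⁻ s in Ioc 0 t, F s) ^ p
    _ ≤ ∫⁻ t in Ioi (0 : ℝ), ENNReal.ofReal (t ^ (-(a * p) - 1)) *
          ∫⁻ s in Ioc 0 t, ENNReal.ofReal (s ^ (p - 1)) * F s ^ p := by
        gcongr with t
        exact lintegral_Ioc_rpow_le_of_antitoneOn hp0 hp1 (hF.mono Ioc_subset_Ioi_self)
    _ = ENNReal.ofReal (a * p)⁻¹ *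
          ∫⁻ s in Ioi (0 : ℝ), ENNReal.ofReal (s ^ (-(a * p))) *
            (ENNReal.ofReal (s ^ (p - 1)) * F s ^ p) :=
        lintegral_rpow_mul_lintegral_Ioc (by positivity) (by fun_prop)
    _ = ENNReal.ofReal (a * p)⁻¹ *
          ∫⁻ s in Ioi (0 : ℝ), ENNReal.ofReal (s ^ ((1 - a) * p - 1)) * F s ^ p := by
        congr 1
        refine setLIntegral_congr_fun measurableSet_Ioi fun s hs ↦ ?_
        rw [← mul_assoc, ofReal_rpow_mul_ofReal_rpow hs]
        ring_nf

end ExponentAtMostOne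

theorem lintegral_hardy_of_antitoneOn {p a : ℝ} (hp : 0 < p) (ha : 0 < a) {F : ℝ → ℝ≥0∞}
    (hF : AntitoneOn F (Ioi 0)) :
    ∫⁻ t in Ioi (0 : ℝ), ENNReal.ofReal (t ^ (-(a * p) - 1)) * (∫⁻ s in Ioc 0 t, F s) ^ p ≤
      ENNReal.ofReal ((a * min p 1) ^ (-max p 1)) *
        ∫⁻ s in Ioi (0 : ℝ), ENNReal.ofReal (s ^ ((1 - a) * p - 1)) * F s ^ p := by
  rcases le_total p 1 with hp1 | hp1
  · simpa only [min_eq_left hp1, max_eq_right hp1, Real.rpow_neg_one] using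
      lintegral_hardy_of_antitoneOn_of_le_one hp hp1 ha hF
  · simpa only [min_eq_right hp1, max_eq_left hp1, mul_one] using
      lintegral_hardy_of_one_le hp1 ha (aemeasurable_restrict_of_antitoneOn measurableSet_Ioi hF)

theorem stmt_4_general {r q α : ℝ} (hr : 0 < r) (hq : 0 < q) (hα : 0 < α) {f : ℝ → ℝ≥0∞}
    (hf : AntitoneOn f (Ioi 0)) :
    (∫⁻ t in Ioi (0 : ℝ), (ENNReal.ofReal (t ^ (-α)) *
        (∫⁻ s in Ioc (0 : ℝ) t, f s ^ r) ^ (1 / r)) ^ q * ENNReal.ofReal t⁻¹) ^ (1 / q) ≤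
      ENNReal.ofReal (min q r ^ (-max (1 / q) (1 / r))) *
        ENNReal.ofReal (α ^ (-max (1 / q) (1 / r))) *
        (∫⁻ t in Ioi (0 : ℝ),
          (ENNReal.ofReal (t ^ (1 / r - α)) * f t) ^ q * ENNReal.ofReal t⁻¹) ^ (1 / q) := by
  have hfr : AntitoneOn (fun s ↦ f s ^ r) (Ioi 0) :=
    (ENNReal.monotone_rpow_of_nonneg hr.le).comp_antitoneOn hf
  have hardy := lintegral_hardy_of_antitoneOn (div_pos hq hr) (mul_pos hα hr) hfr
  have lhs_exponent : -(α * r * (q / r)) - 1 = -α * q - 1 := by field_simp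
  have rhs_exponent : (1 - α * r) * (q / r) - 1 = (1 / r - α) * q - 1 := by field_simp
  have min_scale : α * r * min (q / r) 1 = min q r * α := by
    rw [mul_assoc, mul_min_of_nonneg _ _ hr.le, mul_div_cancel₀ _ hr.ne', mul_one, mul_comm]
  have max_scale : -max (q / r) 1 = -max (1 / q) (1 / r) * q := by
    rw [neg_mul, max_mul_of_nonneg _ _ hq.le, one_div_mul_cancel hq.ne', one_div_mul_eq_div,
      max_comm]
  have min_pos : 0 < min q r := lt_min hq hr
  simp only [← ENNReal.rpow_mul, mul_div_cancel₀ _ hr.ne', lhs_exponent, rhs_exponent, min_scale,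
    max_scale] at hardy
  rw [lintegral_ofReal_rpow_mul_rpow_mul_inv hq.le, lintegral_ofReal_rpow_mul_rpow_mul_inv hq.le,
    ← ENNReal.ofReal_mul (by positivity), ← Real.mul_rpow min_pos.le hα.le, one_div q,
    ENNReal.rpow_inv_le_iff hq, ENNReal.mul_rpow_of_nonneg _ _ hq.le,
    ENNReal.rpow_inv_rpow hq.ne', ofReal_rpow_rpow (by positivity)]
  simpa only [← ENNReal.rpow_mul, one_div, inv_mul_eq_div] using hardy

/-- Hardy's inequality (first form), with constant `C` depending only on `q, r`
(not on `α`): for every `α > 0` and nonincreasing `f : (0,∞) → [0,∞)`,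
`(∫₀^∞ (t^{-α} (∫₀ᵗ f(s)^r ds)^{1/r})^q dt/t)^{1/q}
  ≤ C α^{-β} (∫₀^∞ (t^{1/r-α} f(t))^q dt/t)^{1/q}`, `β = max(1/q, 1/r)`. -/
theorem stmt_4 (r q : ℝ) (hr : 0 < r) (hq : 0 < q) :
    ∃ C : ℝ, 0 < C ∧ ∀ α : ℝ, 0 < α → ∀ f : ℝ → ℝ, Measurable f →
      (∀ x ∈ Ioi (0:ℝ), 0 ≤ f x) → AntitoneOn f (Ioi 0) →
      (∫⁻ t in Ioi (0:ℝ),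
          (ENNReal.ofReal (t ^ (-α)) *
            (∫⁻ s in Ioc (0:ℝ) t, ENNReal.ofReal (f s) ^ r) ^ (1 / r)) ^ q
          * ENNReal.ofReal t⁻¹) ^ (1 / q)
        ≤ ENNReal.ofReal C * ENNReal.ofReal (α ^ (-(max (1/q) (1/r)))) *
          (∫⁻ t in Ioi (0:ℝ),
            (ENNReal.ofReal (t ^ (1/r - α)) * ENNReal.ofReal (f t)) ^ q
            * ENNReal.ofReal t⁻¹) ^ (1 / q) := by
  refine ⟨min q r ^ (-max (1 / q) (1 / r)), by positivity, fun α hα f _ _ hf ↦ ?_⟩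
  exact stmt_4_general hr hq hα (ENNReal.ofReal_mono.comp_antitoneOn hf)
end

section
/- Let f ∈ L¹([0,1]²) with ‖f‖_{L_{(2,1)}} < ∞. Then for every N₂ ∈ ℕ, every finite set e ⊂ ℕ, and every family assigning to each m₁ ∈ e a finite set ω(m₁) ⊂ ℕ with card ω(m₁) = N₂, one has (Σ_{m₁∈e} Σ_{m₂∈ω(m₁)} |a_{m₁m₂}|²)^{1/2} ≤ M₂ N₂^{1/2} ‖f‖_{L_{(2,1)}}. -/
open MeasureTheory Set ENNReal

/-- The mixed-norm Lebesgue (quasi-)norm on `[0,1]²`: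
`‖f‖_{L_{(p₁,p₂)}} = (∫₀¹(∫₀¹|f(x₁,x₂)|^{p₁} dx₁)^{p₂/p₁} dx₂)^{1/p₂}`. -/
noncomputable def mixedNorm (p₁ p₂ : ℝ) (f : ℝ → ℝ → ℂ) : ℝ≥0∞ :=
  (∫⁻ x₂ in Icc (0:ℝ) 1,
      (∫⁻ x₁ in Icc (0:ℝ) 1, (‖f x₁ x₂‖₊ : ℝ≥0∞) ^ p₁) ^ (p₂ / p₁)) ^ (1 / p₂)

/-- `φ` is an orthonormal system in `L²[0,1]`. -/
def OrthonormalOn01 (φ : ℕ → ℝ → ℂ) : Prop :=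
  ∀ m n : ℕ,
    ∫ x in Icc (0:ℝ) 1, φ m x * (starRingEnd ℂ) (φ n x) = if m = n then 1 else 0

/-- The Fourier coefficients of `f` with respect to the product system
`φ_{k₁}(x₁) ψ_{k₂}(x₂)`. -/
noncomputable def coeff (φ ψ : ℕ → ℝ → ℂ) (f : ℝ → ℝ → ℂ) (k₁ k₂ : ℕ) : ℂ :=
  ∫ x₂ in Icc (0:ℝ) 1, ∫ x₁ in Icc (0:ℝ) 1,
    f x₁ x₂ * (starRingEnd ℂ) (φ k₁ x₁) * (starRingEnd ℂ) (ψ k₂ x₂)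

/-!
Fix `y` and let `c m y` be the `m`-th Fourier coefficient of the section `f (·, y)` with respect to
`φ`. Since `ψ k` is bounded by `C`, the double coefficient `a m k` is at most `C ∫ |c m y| dy`,
uniformly in `k`; the at most `N` indices in `ω m` cost a factor `N` in the sum of squares. It
remains to bound the `ℓ²` norm over `m` of `∫ |c m y| dy`: Minkowski's inequality moves the `ℓ²`
norm inside the integral, where Bessel's inequality bounds it by the `L²` norm of `f (·, y)`.
-/

open scoped ComplexConjugate

section Minkowski

variable {α ι : Type*} [MeasurableSpace α] {μ : Measure α}

/-- Hölder's inequality against the weights `(∫⁻ x, F i x ∂μ) ^ (p - 1)`; cancelling the first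
factor on the right yields Minkowski's inequality. -/
theorem sum_rpow_lintegral_le_mul_lintegral_Lp {p q : ℝ} (hpq : p.HolderConjugate q)
    {F : ι → α → ℝ≥0∞} {s : Finset ι} (hF : ∀ i ∈ s, AEMeasurable (F i) μ)
    (hfin : ∀ i ∈ s, ∫⁻ x, F i x ∂μ ≠ ∞) :
    ∑ i ∈ s, (∫⁻ x, F i x ∂μ) ^ p
      ≤ (∑ i ∈ s, (∫⁻ x, F i x ∂μ) ^ p) ^ (1 / q)
        * ∫⁻ x, (∑ i ∈ s, F i x ^ p) ^ (1 / p) ∂μ := by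
  set a : ι → ℝ≥0∞ := fun i => ∫⁻ x, F i x ∂μ
  have ha_top : ∀ i ∈ s, a i ^ (p - 1) ≠ ∞ := fun i hi =>
    ENNReal.rpow_ne_top_of_nonneg hpq.sub_one_pos.le (hfin i hi)
  have hS_top : (∑ i ∈ s, a i ^ p) ^ (1 / q) ≠ ∞ :=
    ENNReal.rpow_ne_top_of_nonneg hpq.symm.one_div_nonneg <|
      ENNReal.sum_ne_top.2 fun i hi => ENNReal.rpow_ne_top_of_nonneg hpq.nonneg (hfin i hi)
  calc ∑ i ∈ s, a i ^ p
      = ∑ i ∈ s, ∫⁻ x, a i ^ (p - 1) * F i x ∂μ := by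
        refine Finset.sum_congr rfl fun i hi => ?_
        rw [lintegral_const_mul' _ _ (ha_top i hi)]
        conv_rhs => rw [← ENNReal.rpow_one (∫⁻ x, F i x ∂μ)]
        rw [← ENNReal.rpow_add_of_nonneg _ _ hpq.sub_one_pos.le zero_le_one, sub_add_cancel]
    _ = ∫⁻ x, ∑ i ∈ s, a i ^ (p - 1) * F i x ∂μ :=
        (lintegral_finsetSum' s fun i hi => (hF i hi).const_mul _).symm
    _ ≤ ∫⁻ x, (∑ i ∈ s, a i ^ p) ^ (1 / q) * (∑ i ∈ s, F i x ^ p) ^ (1 / p) ∂μ := by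
        refine lintegral_mono fun x => ?_
        simpa only [← ENNReal.rpow_mul, hpq.sub_one_mul_conj]
          using ENNReal.inner_le_Lp_mul_Lq s (fun i => a i ^ (p - 1)) (F · x) hpq.symm
    _ = (∑ i ∈ s, a i ^ p) ^ (1 / q) * ∫⁻ x, (∑ i ∈ s, F i x ^ p) ^ (1 / p) ∂μ :=
        lintegral_const_mul' _ _ hS_top

theorem lintegral_le_lintegral_Lp {p : ℝ} (hp : 0 < p) (F : ι → α → ℝ≥0∞) {s : Finset ι}
    {i : ι} (hi : i ∈ s) :
    ∫⁻ x, F i x ∂μ ≤ ∫⁻ x, (∑ j ∈ s, F j x ^ p) ^ (1 / p) ∂μ := by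
  refine lintegral_mono fun x => ?_
  rw [one_div, ENNReal.le_rpow_inv_iff hp]
  exact Finset.single_le_sum (f := fun j => F j x ^ p) (fun _ _ => zero_le) hi

theorem Lp_lintegral_le_lintegral_Lp {p : ℝ} (hp : 1 ≤ p) {F : ι → α → ℝ≥0∞} {s : Finset ι}
    (hF : ∀ i ∈ s, AEMeasurable (F i) μ) :
    (∑ i ∈ s, (∫⁻ x, F i x ∂μ) ^ p) ^ (1 / p)
      ≤ ∫⁻ x, (∑ i ∈ s, F i x ^ p) ^ (1 / p) ∂μ := by
  rcases hp.eq_or_lt with rfl | hp_one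
  · simp only [ENNReal.rpow_one, div_one, lintegral_finsetSum' s hF, le_refl]
  have hp_pos : 0 < p := one_pos.trans hp_one
  by_cases hfin : ∀ i ∈ s, ∫⁻ x, F i x ∂μ ≠ ∞
  case neg =>
    push Not at hfin
    obtain ⟨i, hi, htop⟩ := hfin
    exact le_top.trans (htop.ge.trans (lintegral_le_lintegral_Lp hp_pos F hi))
  have hpq := Real.HolderConjugate.conjExponent hp_one
  have hS := sum_rpow_lintegral_le_mul_lintegral_Lp hpq hF hfin
  set S := ∑ i ∈ s, (∫⁻ x, F i x ∂μ) ^ p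
  have hS_top : S ≠ ∞ :=
    ENNReal.sum_ne_top.2 fun i hi => ENNReal.rpow_ne_top_of_nonneg hp_pos.le (hfin i hi)
  rcases eq_or_ne S 0 with hS_zero | hS_zero
  · rw [hS_zero, ENNReal.zero_rpow_of_pos hpq.one_div_pos]
    exact zero_le
  have hS_split : S ^ (1 / p.conjExponent) * S ^ (1 / p) = S := by
    rw [← ENNReal.rpow_add _ _ hS_zero hS_top, add_comm, hpq.one_div_add_one_div, div_one,
      ENNReal.rpow_one]
  have hfactor_zero : S ^ (1 / p.conjExponent) ≠ 0 :=
    (ENNReal.rpow_pos (pos_iff_ne_zero.2 hS_zero) hS_top).ne'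
  have hfactor_top : S ^ (1 / p.conjExponent) ≠ ∞ :=
    ENNReal.rpow_ne_top_of_nonneg hpq.symm.one_div_nonneg hS_top
  exact (ENNReal.mul_le_mul_iff_right hfactor_zero hfactor_top).1 (hS_split.trans_le hS)

end Minkowski

theorem Lp_sum_sum_le_of_le_mul {ι κ : Type*} {a : ι → κ → ℝ≥0∞} {b : ι → ℝ≥0∞} {C : ℝ≥0∞}
    {N : ℕ} {e : Finset ι} {ω : ι → Finset κ} {p : ℝ} (hp : 0 < p)
    (hω : ∀ m ∈ e, (ω m).card ≤ N) (hab : ∀ m ∈ e, ∀ k ∈ ω m, a m k ≤ b m * C) :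
    (∑ m ∈ e, ∑ k ∈ ω m, a m k ^ p) ^ (1 / p)
      ≤ C * (N : ℝ≥0∞) ^ (1 / p) * (∑ m ∈ e, b m ^ p) ^ (1 / p) := by
  have hsum : ∀ m ∈ e, ∑ k ∈ ω m, a m k ^ p ≤ C ^ p * N * b m ^ p := fun m hm =>
    calc ∑ k ∈ ω m, a m k ^ p
        ≤ (ω m).card • (b m * C) ^ p :=
          Finset.sum_le_card_nsmul _ _ _ fun k hk => ENNReal.rpow_le_rpow (hab m hm k hk) hp.le
      _ ≤ N * (b m * C) ^ p := by
          rw [nsmul_eq_mul]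
          gcongr
          exact hω m hm
      _ = C ^ p * N * b m ^ p := by
          rw [ENNReal.mul_rpow_of_nonneg _ _ hp.le]
          ring
  have hinv_nonneg : 0 ≤ 1 / p := by positivity
  calc (∑ m ∈ e, ∑ k ∈ ω m, a m k ^ p) ^ (1 / p)
      ≤ (C ^ p * N * ∑ m ∈ e, b m ^ p) ^ (1 / p) := by
        rw [Finset.mul_sum]
        exact ENNReal.rpow_le_rpow (Finset.sum_le_sum hsum) hinv_nonneg
    _ = C * (N : ℝ≥0∞) ^ (1 / p) * (∑ m ∈ e, b m ^ p) ^ (1 / p) := by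
        rw [ENNReal.mul_rpow_of_nonneg _ _ hinv_nonneg,
          ENNReal.mul_rpow_of_nonneg _ _ hinv_nonneg,
          one_div, ENNReal.rpow_rpow_inv hp.ne']

theorem enorm_integral_mul_conj_le_eLpNorm_mul_eLpNorm {𝕜 α : Type*} [RCLike 𝕜]
    [MeasurableSpace α] {μ : Measure α} {p q : ℝ≥0∞} [p.HolderConjugate q] {g h : α → 𝕜}
    (hg : AEStronglyMeasurable g μ) (hh : AEStronglyMeasurable h μ) :
    ‖∫ x, g x * conj (h x) ∂μ‖ₑ ≤ eLpNorm g p μ * eLpNorm h q μ := by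
  calc ‖∫ x, g x * conj (h x) ∂μ‖ₑ
      ≤ eLpNorm (g • fun x => conj (h x)) 1 μ := by
        rw [eLpNorm_one_eq_lintegral_enorm]
        exact enorm_integral_le_lintegral_enorm _
    _ ≤ eLpNorm g p μ * eLpNorm (fun x => conj (h x)) q μ :=
        eLpNorm_smul_le_mul_eLpNorm (RCLike.continuous_conj.comp_aestronglyMeasurable hh) hg
    _ = eLpNorm g p μ * eLpNorm h q μ := by
        rw [eLpNorm_congr_norm_ae (.of_forall fun x => RCLike.norm_conj (h x))]

section Bessel

variable {𝕜 ι α : Type*} [RCLike 𝕜] [MeasurableSpace α] {μ : Measure α}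

theorem sum_enorm_inner_rpow_le_enorm {E : Type*} [SeminormedAddCommGroup E]
    [InnerProductSpace 𝕜 E] {v : ι → E} (hv : Orthonormal 𝕜 v) (x : E) (s : Finset ι) :
    (∑ i ∈ s, ‖inner 𝕜 (v i) x‖ₑ ^ (2 : ℝ)) ^ ((1 : ℝ) / 2) ≤ ‖x‖ₑ := by
  rw [one_div, ENNReal.rpow_inv_le_iff two_pos]
  have bessel := ENNReal.ofReal_le_ofReal (hv.sum_inner_products_le (x := x) (s := s))
  rw [ENNReal.ofReal_sum_of_nonneg fun _ _ => by positivity] at bessel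
  simpa only [ENNReal.rpow_two, ENNReal.ofReal_pow (norm_nonneg _), ofReal_norm] using bessel

theorem inner_toLp_toLp_eq_integral {g h : α → 𝕜} (hg : MemLp g 2 μ) (hh : MemLp h 2 μ) :
    inner 𝕜 (hg.toLp g) (hh.toLp h) = ∫ x, h x * conj (g x) ∂μ := by
  rw [L2.inner_def]
  refine integral_congr_ae ?_
  filter_upwards [hg.coeFn_toLp, hh.coeFn_toLp] with x hgx hhx
  rw [hgx, hhx, RCLike.inner_apply]

theorem sum_enorm_integral_mul_conj_rpow_le_eLpNorm {φ : ι → α → 𝕜} (hφ : ∀ m, MemLp (φ m) 2 μ)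
    (horth : Orthonormal 𝕜 fun m => (hφ m).toLp (φ m)) {g : α → 𝕜}
    (hg : AEStronglyMeasurable g μ) (s : Finset ι) :
    (∑ m ∈ s, ‖∫ x, g x * conj (φ m x) ∂μ‖ₑ ^ (2 : ℝ)) ^ ((1 : ℝ) / 2) ≤ eLpNorm g 2 μ := by
  by_cases hgtop : eLpNorm g 2 μ = ∞
  · exact hgtop ▸ le_top
  have hgL : MemLp g 2 μ := ⟨hg, lt_top_iff_ne_top.2 hgtop⟩
  simpa only [inner_toLp_toLp_eq_integral, Lp.enorm_toLp]
    using sum_enorm_inner_rpow_le_enorm horth (hgL.toLp g) s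

end Bessel

section IteratedCoefficients

variable {𝕜 ι κ α β : Type*} [RCLike 𝕜] [MeasurableSpace α] [MeasurableSpace β]
  {μ : Measure α} {ν : Measure β}

/-- The Fourier coefficient, with respect to `φ`, of the section `f (·, y)`, as a function of the
remaining variable `y`. -/
noncomputable def sectionCoeff (μ : Measure α) (φ : α → 𝕜) (f : α → β → 𝕜) (y : β) : 𝕜 :=
  ∫ x, f x y * conj (φ x) ∂μ

theorem aestronglyMeasurable_sectionCoeff [SFinite μ] [SFinite ν] {φ : α → 𝕜} {f : α → β → 𝕜}
    (hφ : AEStronglyMeasurable φ μ)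
    (hf : AEStronglyMeasurable (Function.uncurry f) (μ.prod ν)) :
    AEStronglyMeasurable (sectionCoeff μ φ f) ν :=
  (hf.mul (RCLike.continuous_conj.comp_aestronglyMeasurable hφ.comp_fst)).prod_swap
    |>.integral_prod_right'

theorem sum_lintegral_enorm_sectionCoeff_rpow_le [SFinite μ] [SFinite ν] {φ : ι → α → 𝕜}
    (hφ : ∀ m, MemLp (φ m) 2 μ) (horth : Orthonormal 𝕜 fun m => (hφ m).toLp (φ m))
    {f : α → β → 𝕜} (hf : AEStronglyMeasurable (Function.uncurry f) (μ.prod ν)) (s : Finset ι) :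
    (∑ m ∈ s, (∫⁻ y, ‖sectionCoeff μ (φ m) f y‖ₑ ∂ν) ^ (2 : ℝ)) ^ ((1 : ℝ) / 2)
      ≤ ∫⁻ y, eLpNorm (f · y) 2 μ ∂ν := by
  have hc : ∀ m, AEStronglyMeasurable (sectionCoeff μ (φ m) f) ν := fun m =>
    aestronglyMeasurable_sectionCoeff (hφ m).aestronglyMeasurable hf
  refine (Lp_lintegral_le_lintegral_Lp one_le_two fun m _ => (hc m).enorm).trans ?_
  refine lintegral_mono_ae ?_
  filter_upwards [hf.prod_swap.prodMk_left] with y hfy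
  exact sum_enorm_integral_mul_conj_rpow_le_eLpNorm hφ horth hfy s

theorem stmt_6_general [SFinite μ] [SFinite ν] {φ : ι → α → 𝕜} {ψ : κ → β → 𝕜} {C : ℝ≥0∞}
    (hφ : ∀ m, MemLp (φ m) 2 μ) (horth : Orthonormal 𝕜 fun m => (hφ m).toLp (φ m))
    (hψ : ∀ k, AEStronglyMeasurable (ψ k) ν) (hψC : ∀ k, eLpNorm (ψ k) ∞ ν ≤ C)
    {f : α → β → 𝕜} (hf : AEStronglyMeasurable (Function.uncurry f) (μ.prod ν))
    {N : ℕ} {e : Finset ι} {ω : ι → Finset κ} (hω : ∀ m ∈ e, (ω m).card ≤ N) :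
    (∑ m ∈ e, ∑ k ∈ ω m,
        ‖∫ y, ∫ x, f x y * conj (φ m x) * conj (ψ k y) ∂μ ∂ν‖ₑ ^ (2 : ℝ)) ^ ((1 : ℝ) / 2)
      ≤ C * (N : ℝ≥0∞) ^ ((1 : ℝ) / 2) * ∫⁻ y, eLpNorm (f · y) 2 μ ∂ν := by
  have hcoeff : ∀ m ∈ e, ∀ k ∈ ω m, ‖∫ y, ∫ x, f x y * conj (φ m x) * conj (ψ k y) ∂μ ∂ν‖ₑ
      ≤ (∫⁻ y, ‖sectionCoeff μ (φ m) f y‖ₑ ∂ν) * C := by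
    intro m _ k _
    have hc := aestronglyMeasurable_sectionCoeff (hφ m).aestronglyMeasurable hf
    simp only [integral_mul_const]
    rw [← eLpNorm_one_eq_lintegral_enorm]
    exact (enorm_integral_mul_conj_le_eLpNorm_mul_eLpNorm hc (hψ k)).trans
      (mul_le_mul_right (hψC k) _)
  refine (Lp_sum_sum_le_of_le_mul two_pos hω hcoeff).trans ?_
  gcongr
  exact sum_lintegral_enorm_sectionCoeff_rpow_le hφ horth hf e

end IteratedCoefficients

theorem mixedNorm_two_one (f : ℝ → ℝ → ℂ) :
    mixedNorm 2 1 f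
      = ∫⁻ y in Icc (0 : ℝ) 1, eLpNorm (f · y) 2 (volume.restrict (Icc (0 : ℝ) 1)) := by
  simp only [mixedNorm, eLpNorm_eq_lintegral_rpow_enorm_toReal two_ne_zero ofNat_ne_top,
    toReal_ofNat, div_one, ENNReal.rpow_one, enorm_eq_nnnorm]

theorem OrthonormalOn01.orthonormal_toLp {φ : ℕ → ℝ → ℂ} (hφ : OrthonormalOn01 φ)
    (hφL : ∀ m, MemLp (φ m) 2 (volume.restrict (Icc (0 : ℝ) 1))) :
    Orthonormal ℂ fun m => (hφL m).toLp (φ m) := by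
  rw [orthonormal_iff_ite]
  intro m n
  rw [inner_toLp_toLp_eq_integral, hφ n m]
  simp only [eq_comm]

/-- First inequality of Lemma 5.1:
`(Σ_{m₁∈e} Σ_{m₂∈ω(m₁)} |a_{m₁m₂}|²)^{1/2} ≤ M₂ N₂^{1/2} ‖f‖_{L_{(2,1)}}`
whenever each `ω(m₁)` has cardinality `N₂`. -/
theorem stmt_6 (φ ψ : ℕ → ℝ → ℂ) (M₁ M₂ : ℝ)
    (hφm : ∀ m, Measurable (φ m)) (hψm : ∀ m, Measurable (ψ m))
    (hφ : OrthonormalOn01 φ) (hψ : OrthonormalOn01 ψ)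
    (hφbd : ∀ m, ∀ x ∈ Icc (0:ℝ) 1, ‖φ m x‖ ≤ M₁)
    (hψbd : ∀ m, ∀ x ∈ Icc (0:ℝ) 1, ‖ψ m x‖ ≤ M₂)
    (f : ℝ → ℝ → ℂ)
    (hfint : IntegrableOn (Function.uncurry f) (Icc (0:ℝ) 1 ×ˢ Icc (0:ℝ) 1))
    (hffin : mixedNorm 2 1 f ≠ ⊤)
    (N₂ : ℕ) (e : Finset ℕ) (ω : ℕ → Finset ℕ)
    (hω : ∀ m₁ ∈ e, (ω m₁).card = N₂) :
    (∑ m₁ ∈ e, ∑ m₂ ∈ ω m₁, (‖coeff φ ψ f m₁ m₂‖₊ : ℝ≥0∞) ^ (2:ℝ)) ^ ((1:ℝ)/2)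
      ≤ ENNReal.ofReal M₂ * (N₂ : ℝ≥0∞) ^ ((1:ℝ)/2) * mixedNorm 2 1 f := by
  have hφL : ∀ m, MemLp (φ m) 2 (volume.restrict (Icc (0 : ℝ) 1)) := fun m =>
    .of_bound (hφm m).aestronglyMeasurable M₁
      (ae_restrict_of_forall_mem measurableSet_Icc (hφbd m))
  have hψC : ∀ k, eLpNorm (ψ k) ∞ (volume.restrict (Icc (0 : ℝ) 1)) ≤ ENNReal.ofReal M₂ := fun k =>
    eLpNormEssSup_le_of_ae_bound (ae_restrict_of_forall_mem measurableSet_Icc (hψbd k))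
  rw [IntegrableOn, Measure.volume_eq_prod, ← Measure.prod_restrict] at hfint
  rw [mixedNorm_two_one]
  exact stmt_6_general hφL (hφ.orthonormal_toLp hφL) (fun k => (hψm k).aestronglyMeasurable) hψC
    hfint.aestronglyMeasurable fun m hm => (hω m hm).le
end

section
/- Let f ∈ L¹([0,1]²) with ‖f‖_{L_{(1,2)}} < ∞. Then for every N₁ ∈ ℕ, every finite set e ⊂ ℕ with card e = N₁, and every family assigning to each m₁ ∈ e a finite set ω(m₁) ⊂ ℕ, one has (Σ_{m₁∈e} Σ_{m₂∈ω(m₁)} |a_{m₁m₂}|²)^{1/2} ≤ M₁ N₁^{1/2} ‖f‖_{L_{(1,2)}}. -/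
open MeasureTheory Set ENNReal

/-!
For fixed `m₁` the coefficients `a_{m₁ m₂}` are the one-variable Fourier coefficients with respect
to `ψ` of the partial coefficient `g(x₂) = ∫ f(x₁, x₂) conj φ_{m₁}(x₁) dx₁`. The uniform bound on
`φ_{m₁}` gives `|g(x₂)| ≤ M₁ ‖f(·, x₂)‖₁`, hence `‖g‖₂ ≤ M₁ ‖f‖_{L_{(1,2)}}`, and Bessel's
inequality for `ψ` bounds the sum over `m₂`. Summing over the `N₁` values of `m₁` gives the claim.
-/

open scoped ComplexConjugate

section Bessel

variable {𝕜 Y κ : Type*} [RCLike 𝕜] [MeasurableSpace Y] {ν : Measure Y}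

lemma memLp_two_of_integral_mul_conj_ne_zero {g : Y → 𝕜} (hg : AEStronglyMeasurable g ν)
    (hne : ∫ y, g y * conj (g y) ∂ν ≠ 0) : MemLp g 2 ν := by
  have hint : Integrable (fun y => g y * conj (g y)) ν := .of_integral_ne_zero hne
  rw [memLp_two_iff_integrable_sq_norm hg]
  simpa only [norm_mul, RCLike.norm_conj, ← sq] using hint.norm

lemma inner_toLp_eq_integral_mul_conj {g h : Y → 𝕜} (hg : MemLp g 2 ν) (hh : MemLp h 2 ν) :
    inner 𝕜 (hg.toLp g) (hh.toLp h) = ∫ y, h y * conj (g y) ∂ν := by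
  rw [L2.inner_def]
  refine integral_congr_ae ?_
  filter_upwards [hg.coeFn_toLp, hh.coeFn_toLp] with y hgy hhy
  rw [hgy, hhy, RCLike.inner_apply]

lemma orthonormal_toLp_iff [DecidableEq κ] {ψ : κ → Y → 𝕜} (hψ : ∀ j, MemLp (ψ j) 2 ν) :
    Orthonormal 𝕜 (fun j => (hψ j).toLp (ψ j)) ↔
      ∀ i j, ∫ y, ψ i y * conj (ψ j y) ∂ν = if i = j then 1 else 0 := by
  simp only [orthonormal_iff_ite, inner_toLp_eq_integral_mul_conj]
  rw [forall_comm]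
  simp only [eq_comm]

lemma sum_enorm_integral_mul_conj_sq_le {ψ : κ → Y → 𝕜} (hψ : ∀ j, MemLp (ψ j) 2 ν)
    (hortho : Orthonormal 𝕜 (fun j => (hψ j).toLp (ψ j)))
    {g : Y → 𝕜} (hg : AEStronglyMeasurable g ν) (s : Finset κ) :
    ∑ j ∈ s, ‖∫ y, g y * conj (ψ j y) ∂ν‖ₑ ^ 2 ≤ eLpNorm g 2 ν ^ 2 := by
  rcases eq_top_or_lt_top (eLpNorm g 2 ν) with hinfinite | hfinite
  · simp [hinfinite]
  have hgL2 : MemLp g 2 ν := ⟨hg, hfinite⟩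
  have hbessel := ENNReal.ofReal_le_ofReal
    (hortho.sum_inner_products_le (hgL2.toLp g) (s := s))
  rw [ENNReal.ofReal_sum_of_nonneg fun _ _ => by positivity] at hbessel
  simpa only [inner_toLp_eq_integral_mul_conj, ENNReal.ofReal_pow (norm_nonneg _),
    ofReal_norm, Lp.enorm_toLp] using hbessel

end Bessel

section PartialFourierCoeff

variable {𝕜 X Y : Type*} [RCLike 𝕜] [MeasurableSpace X] [MeasurableSpace Y]
  {μ : Measure X} {ν : Measure Y}

/-- The Fourier coefficient of `f` in its first variable alone, with respect to `φ`:
`y ↦ ∫ f(x, y) conj φ(x) dμ(x)`. -/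
noncomputable def partialFourierCoeff (μ : Measure X) (φ : X → 𝕜) (f : X → Y → 𝕜) (y : Y) : 𝕜 :=
  ∫ x, f x y * conj (φ x) ∂μ

lemma aestronglyMeasurable_partialFourierCoeff [SFinite μ] [SFinite ν] {φ : X → 𝕜}
    {f : X → Y → 𝕜} (hφ : AEStronglyMeasurable φ μ)
    (hf : AEStronglyMeasurable (Function.uncurry f) (μ.prod ν)) :
    AEStronglyMeasurable (partialFourierCoeff μ φ f) ν :=
  (hf.mul (RCLike.continuous_conj.comp_aestronglyMeasurable hφ).comp_fst).prod_swap
    |>.integral_prod_right'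

lemma enorm_integral_mul_conj_le {φ g : X → 𝕜} {M : ℝ} (hφ : ∀ᵐ x ∂μ, ‖φ x‖ ≤ M) :
    ‖∫ x, g x * conj (φ x) ∂μ‖ₑ ≤ ENNReal.ofReal M * eLpNorm g 1 μ := by
  have hpointwise : ∀ᵐ x ∂μ, ‖g x * conj (φ x)‖ ≤ M * ‖g x‖ := by
    filter_upwards [hφ] with x hx
    rw [norm_mul, RCLike.norm_conj, mul_comm]
    gcongr
  calc ‖∫ x, g x * conj (φ x) ∂μ‖ₑ
      ≤ eLpNorm (fun x => g x * conj (φ x)) 1 μ := by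
        rw [eLpNorm_one_eq_lintegral_enorm]
        exact enorm_integral_le_lintegral_enorm _
    _ ≤ ENNReal.ofReal M * eLpNorm g 1 μ := eLpNorm_le_mul_eLpNorm_of_ae_le_mul hpointwise 1

lemma eLpNorm_partialFourierCoeff_le {φ : X → 𝕜} {M : ℝ} (hφ : ∀ᵐ x ∂μ, ‖φ x‖ ≤ M)
    (f : X → Y → 𝕜) (p : ℝ≥0∞) :
    eLpNorm (partialFourierCoeff μ φ f) p ν ≤
      ENNReal.ofReal M * eLpNorm (fun y => eLpNorm (f · y) 1 μ) p ν :=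
  eLpNorm_le_mul_eLpNorm_of_ae_le_mul' (.of_forall fun _ => enorm_integral_mul_conj_le hφ) p

end PartialFourierCoeff

lemma mixedNorm_eq_eLpNorm {p₁ p₂ : ℝ} (hp₁ : 0 < p₁) (hp₂ : 0 < p₂) (f : ℝ → ℝ → ℂ) :
    mixedNorm p₁ p₂ f =
      eLpNorm (fun x₂ => eLpNorm (f · x₂) (ENNReal.ofReal p₁) (volume.restrict (Icc 0 1)))
        (ENNReal.ofReal p₂) (volume.restrict (Icc 0 1)) := by
  simp only [mixedNorm, eLpNorm_eq_lintegral_rpow_enorm_toReal (ofReal_pos.2 hp₁).ne' ofReal_ne_top,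
    eLpNorm_eq_lintegral_rpow_enorm_toReal (ofReal_pos.2 hp₂).ne' ofReal_ne_top,
    toReal_ofReal hp₁.le, toReal_ofReal hp₂.le, enorm_eq_self, ← ENNReal.rpow_mul,
    one_div_mul_eq_div, enorm_eq_nnnorm]

theorem stmt_7_general {𝕜 X Y ι κ : Type*} [RCLike 𝕜] [MeasurableSpace X] [MeasurableSpace Y]
    [DecidableEq κ] {μ : Measure X} {ν : Measure Y} [SFinite μ] [SFinite ν]
    {φ : ι → X → 𝕜} {ψ : κ → Y → 𝕜} {M : ℝ}
    (hφm : ∀ i, AEStronglyMeasurable (φ i) μ) (hφbd : ∀ i, ∀ᵐ x ∂μ, ‖φ i x‖ ≤ M)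
    (hψm : ∀ j, AEStronglyMeasurable (ψ j) ν)
    (hψ : ∀ i j, ∫ y, ψ i y * conj (ψ j y) ∂ν = if i = j then 1 else 0)
    {f : X → Y → 𝕜} (hf : AEStronglyMeasurable (Function.uncurry f) (μ.prod ν))
    (e : Finset ι) (ω : ι → Finset κ) :
    (∑ i ∈ e, ∑ j ∈ ω i,
        ‖∫ y, ∫ x, f x y * conj (φ i x) * conj (ψ j y) ∂μ ∂ν‖ₑ ^ (2 : ℝ)) ^ ((1 : ℝ) / 2) ≤
      ENNReal.ofReal M * (e.card : ℝ≥0∞) ^ ((1 : ℝ) / 2) *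
        eLpNorm (fun y => eLpNorm (f · y) 1 μ) 2 ν := by
  set A := eLpNorm (fun y => eLpNorm (f · y) 1 μ) 2 ν
  have hψL2 (j : κ) : MemLp (ψ j) 2 ν :=
    memLp_two_of_integral_mul_conj_ne_zero (hψm j) (by simp [hψ])
  have hrow (i : ι) :
      ∑ j ∈ ω i, ‖∫ y, ∫ x, f x y * conj (φ i x) * conj (ψ j y) ∂μ ∂ν‖ₑ ^ (2 : ℝ) ≤
        (ENNReal.ofReal M * A) ^ 2 := by
    simp only [integral_mul_const, rpow_two]
    exact (sum_enorm_integral_mul_conj_sq_le hψL2 ((orthonormal_toLp_iff hψL2).2 hψ)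
      (aestronglyMeasurable_partialFourierCoeff (hφm i) hf) (ω i)).trans
        (pow_le_pow_left' (eLpNorm_partialFourierCoeff_le (hφbd i) f 2) 2)
  calc _ ≤ (e.card * (ENNReal.ofReal M * A) ^ 2) ^ ((1 : ℝ) / 2) := by
        gcongr
        simpa only [nsmul_eq_mul] using Finset.sum_le_card_nsmul e _ _ fun i _ => hrow i
    _ = (e.card : ℝ≥0∞) ^ ((1 : ℝ) / 2) * (ENNReal.ofReal M * A) := by
        rw [mul_rpow_of_nonneg _ _ (by norm_num), ← rpow_natCast_mul]
        norm_num
    _ = ENNReal.ofReal M * (e.card : ℝ≥0∞) ^ ((1 : ℝ) / 2) * A := by ring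

/-- Second inequality of Lemma 5.1:
`(Σ_{m₁∈e} Σ_{m₂∈ω(m₁)} |a_{m₁m₂}|²)^{1/2} ≤ M₁ N₁^{1/2} ‖f‖_{L_{(1,2)}}`
whenever `e` has cardinality `N₁`. -/
theorem stmt_7 (φ ψ : ℕ → ℝ → ℂ) (M₁ M₂ : ℝ)
    (hφm : ∀ m, Measurable (φ m)) (hψm : ∀ m, Measurable (ψ m))
    (hφ : OrthonormalOn01 φ) (hψ : OrthonormalOn01 ψ)
    (hφbd : ∀ m, ∀ x ∈ Icc (0:ℝ) 1, ‖φ m x‖ ≤ M₁)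
    (hψbd : ∀ m, ∀ x ∈ Icc (0:ℝ) 1, ‖ψ m x‖ ≤ M₂)
    (f : ℝ → ℝ → ℂ)
    (hfint : IntegrableOn (Function.uncurry f) (Icc (0:ℝ) 1 ×ˢ Icc (0:ℝ) 1))
    (hffin : mixedNorm 1 2 f ≠ ⊤)
    (N₁ : ℕ) (e : Finset ℕ) (he : e.card = N₁) (ω : ℕ → Finset ℕ) :
    (∑ m₁ ∈ e, ∑ m₂ ∈ ω m₁, (‖coeff φ ψ f m₁ m₂‖₊ : ℝ≥0∞) ^ (2:ℝ)) ^ ((1:ℝ)/2)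
      ≤ ENNReal.ofReal M₁ * (N₁ : ℝ≥0∞) ^ ((1:ℝ)/2) * mixedNorm 1 2 f := by
  rw [← he, mixedNorm_eq_eLpNorm one_pos two_pos, ofReal_one, ofReal_ofNat]
  rw [IntegrableOn, Measure.volume_eq_prod, ← Measure.prod_restrict] at hfint
  exact stmt_7_general (fun m => (hφm m).aestronglyMeasurable)
    (fun m => ae_restrict_of_forall_mem measurableSet_Icc (hφbd m))
    (fun m => (hψm m).aestronglyMeasurable) hψ hfint.aestronglyMeasurable e ω
end
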